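/- Let φ be a 3-SAT instance, h > 1 an integer, G = reduction(φ,h), and v the central vertex of the initial path. If T is a v-concentrated spanning tree of G such that d_T(u,w) ≤ 4h for every edge uw of G, then there exists a building block G^{i,j} of G such that the truth assignment a defined by a(x) = true if and only if x^{i,j} is adjacent to v_⊕^{i,j} in T (for each variable x of φ) satisfies φ. -/

import Mathlib

/-!
The levels of `reductionGraph φ h` are explicit: `lev` is the distance from the central vertex
(`dist_eq_lev`), every edge joins consecutive levels, and so in a concentrated spanning tree `T`
every vertex other than the centre has a `T`-neighbour one level down (`exists_parent`).  These
lower neighbours are few: `v_⊕, v_⊖` for `x^b`, a single pole for `x_c^b`, and group vertices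
prescribed by `M` for `q_{l,c}^b`.

Removing the centre `v` from `T` separates `p_1` from `p_2`; `Plus T u` says that `u` is on the
side of `p_1`.  If `u` and `w` are on different sides, then the tree path between them runs through
`v`, so `d_T(u, w) ≥ lev u + lev w` (`lev_add_lev_le_dist`).  Call a block split if its two poles
are on different sides.  The root block is split.  If a block is split and its assignment
falsifies a clause `c`, then for each variable `x` of `c` the vertices `x^b` and `x_c^b` are on
different sides.  As the columns of `M` run through all choices of one vertex from each of the three
pairs, some `q_{l,c}^b` sees only vertices on one side and another sees only vertices on the other
side; hence two consecutive `q_{r,c}^b, q_{r+1,c}^b` are on different sides (`exists_switch`), and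
the block attached there is split.  If no assignment were satisfying, there would thus be a split
block in layer `h`.  Its poles have level `2h` and its variable vertices have level `2h + 1`,
so a variable vertex and the pole on the other side are adjacent in the graph but at distance at
least `4h + 1` in `T`, a contradiction.
-/

open SimpleGraph

/-- A 3-SAT clause on Boolean variables indexed by naturals: variables `v1,v2,v3`
with polarities `p1,p2,p3` (`true` = the variable appears positively). -/
structure Clause3 where
  v1 : ℕ
  v2 : ℕ
  v3 : ℕ
  p1 : Bool
  p2 : Bool
  p3 : Bool
deriving DecidableEq

/-- A 3-SAT instance: a nonempty finite set of clauses, each on 3 distinct variables. -/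
structure SAT3 where
  clauses : Finset Clause3
  nonempty : clauses.Nonempty
  distinct : ∀ c ∈ clauses, c.v1 ≠ c.v2 ∧ c.v1 ≠ c.v3 ∧ c.v2 ≠ c.v3

/-- The variables of a 3-SAT instance. -/
def SAT3.vars (φ : SAT3) : Finset ℕ :=
  φ.clauses.biUnion (fun c => {c.v1, c.v2, c.v3})

/-- A truth assignment satisfies a clause if some literal is made true. -/
def Clause3.satisfiedBy (c : Clause3) (a : ℕ → Bool) : Prop :=
  a c.v1 = c.p1 ∨ a c.v2 = c.p2 ∨ a c.v3 = c.p3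

/-- A truth assignment satisfies an instance if it satisfies every clause. -/
def SAT3.satisfiedBy (φ : SAT3) (a : ℕ → Bool) : Prop :=
  ∀ c ∈ φ.clauses, c.satisfiedBy a

/-- `x` is one of the three variables of clause `c`. -/
def Clause3.hasVar (c : Clause3) (x : ℕ) : Prop :=
  x = c.v1 ∨ x = c.v2 ∨ x = c.v3

/-- The 6 × 8 matrix `M` of the construction. -/
def Mmat : Fin 6 → Fin 8 → Bool :=
  ![![true, true, true, true, false, false, false, false],
    ![false, false, false, false, true, true, true, true],
    ![true, true, false, false, true, true, false, false],
    ![false, false, true, true, false, false, true, true],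
    ![true, false, true, false, true, false, true, false],
    ![false, true, false, true, false, true, false, true]]

/-- The address of a building block: the (clause, index `r`) choices along the chain of
attachments leading from the root block `G^{1,1}` (address `[]`) to this block; the head of
the list is the most recent attachment.  A block of address `b` lies in layer `b.length + 1`. -/
abbrev BlockAddr : Type := List (Clause3 × Fin 7)

/-- The ambient vertices of the reduction graph: the five vertices `q1, p1, v, p2, q2` of the
initial path, and for each building block address `b`: the variable vertices `x^b`, the
clause-occurrence vertices `x_c^b`, and the vertices `q_{r,c}^b`.  The vertices
`v_⊕^b, v_⊖^b` of a block are identified with vertices of its parent (see `vplus`, `vminus`). -/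
inductive RVert where
  | qp : RVert
  | pp : RVert
  | vv : RVert
  | pm : RVert
  | qm : RVert
  | var : BlockAddr → ℕ → RVert
  | varC : BlockAddr → Clause3 → ℕ → RVert
  | q : BlockAddr → Clause3 → Fin 8 → RVert

/-- The vertex `v_⊕` of the block with address `b` (an identified vertex of the parent). -/
def vplus : BlockAddr → RVert
  | [] => RVert.qp
  | (c, r) :: b => RVert.q b c r.castSucc

/-- The vertex `v_⊖` of the block with address `b` (an identified vertex of the parent). -/
def vminus : BlockAddr → RVert
  | [] => RVert.qm
  | (c, r) :: b => RVert.q b c r.succ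

/-- The group of six vertices `g = (y^b, y_c^b, z^b, z_c^b, w^b, w_c^b)` for clause `c`
with variables `y,z,w` in block `b`. -/
def gvec (b : BlockAddr) (c : Clause3) : Fin 6 → RVert :=
  ![RVert.var b c.v1, RVert.varC b c c.v1,
    RVert.var b c.v2, RVert.varC b c c.v2,
    RVert.var b c.v3, RVert.varC b c c.v3]

/-- The block with address `b` is present in `reduction(φ, h)`. -/
def validBlock (φ : SAT3) (h : ℕ) (b : BlockAddr) : Prop :=
  b.length + 1 ≤ h ∧ ∀ p ∈ b, p.1 ∈ φ.clauses

/-- The vertices of `reduction(φ, h)` among the ambient vertices. -/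
def validVert (φ : SAT3) (h : ℕ) : RVert → Prop
  | RVert.qp => True
  | RVert.pp => True
  | RVert.vv => True
  | RVert.pm => True
  | RVert.qm => True
  | RVert.var b x => validBlock φ h b ∧ x ∈ φ.vars
  | RVert.varC b c x => validBlock φ h b ∧ c ∈ φ.clauses ∧ c.hasVar x
  | RVert.q b c _ => validBlock φ h b ∧ c ∈ φ.clauses

/-- The edges of the reduction graph (to be symmetrized): the 4 path edges; the edges
`x^b v_⊕^b`, `x^b v_⊖^b`; the edges between the group of six and the `q` vertices given by
the matrix `M`; and the polarity edges, joining `x_c^b` to `v_⊕^b` when `x` occurs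
positively in `c` and to `v_⊖^b` otherwise. -/
def baseAdj (u w : RVert) : Prop :=
  (u = RVert.qp ∧ w = RVert.pp) ∨
  (u = RVert.pp ∧ w = RVert.vv) ∨
  (u = RVert.vv ∧ w = RVert.pm) ∨
  (u = RVert.pm ∧ w = RVert.qm) ∨
  (∃ b x, u = RVert.var b x ∧ (w = vplus b ∨ w = vminus b)) ∨
  (∃ b c k l, Mmat k l = true ∧ u = gvec b c k ∧ w = RVert.q b c l) ∨
  (∃ (b : BlockAddr) (c : Clause3),
    (u = RVert.varC b c c.v1 ∧ w = (if c.p1 then vplus b else vminus b)) ∨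
    (u = RVert.varC b c c.v2 ∧ w = (if c.p2 then vplus b else vminus b)) ∨
    (u = RVert.varC b c c.v3 ∧ w = (if c.p3 then vplus b else vminus b)))

/-- The vertex type of the graph `reduction(φ, h)`. -/
abbrev RedVert (φ : SAT3) (h : ℕ) : Type := {x : RVert // validVert φ h x}

/-- The graph `G = reduction(φ, h)` of the construction. -/
def reductionGraph (φ : SAT3) (h : ℕ) : SimpleGraph (RedVert φ h) :=
  SimpleGraph.comap Subtype.val (SimpleGraph.fromRel baseAdj)

/-- The central vertex `v` of the initial path of `reduction(φ, h)`. -/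
def centralVert (φ : SAT3) (h : ℕ) : RedVert φ h := ⟨RVert.vv, trivial⟩

/-- `T` is a tree `t`-spanner of `G`: a spanning tree of `G` all whose distances are within a
factor `t` of those of `G`. -/
def IsTreeSpanner {V : Type*} (G T : SimpleGraph V) (t : ℕ) : Prop :=
  T ≤ G ∧ T.IsTree ∧ ∀ u w : V, T.dist u w ≤ t * G.dist u w

/-- A spanning tree `T` of `G` is `v`-concentrated if for every `i ≥ 0` the subgraph of `T`
induced by the ball `N_G^i[v]` is connected. -/
def IsConcentrated {V : Type*} (G T : SimpleGraph V) (v : V) : Prop :=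
  ∀ i : ℕ, (T.induce {x : V | G.dist v x ≤ i}).Connected

/-- The truth assignment read off from a spanning tree `T` at the building block with
address `b`: a variable `x` is set to `true` if and only if the vertex `x^b` is adjacent
in `T` to `v_⊕^b`. -/
noncomputable def blockAssign (φ : SAT3) (h : ℕ) (T : SimpleGraph (RedVert φ h))
    (b : BlockAddr) (x : ℕ) : Bool :=
  @decide
    (∃ (hu : validVert φ h (RVert.var b x)) (hw : validVert φ h (vplus b)),
      T.Adj ⟨RVert.var b x, hu⟩ ⟨vplus b, hw⟩)
    (Classical.dec _)

/-! ### Levels and lower neighbours -/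

/-- The level of an ambient vertex, which is its distance from the centre (`dist_eq_lev`). -/
def lev : RVert → ℕ
  | RVert.vv => 0
  | RVert.pp => 1
  | RVert.pm => 1
  | RVert.qp => 2
  | RVert.qm => 2
  | RVert.var b _ => 2 * b.length + 3
  | RVert.varC b _ _ => 2 * b.length + 3
  | RVert.q b _ _ => 2 * b.length + 4

lemma lev_vplus (b : BlockAddr) : lev (vplus b) = 2 * b.length + 2 := by
  rcases b with _ | ⟨⟨c, r⟩, b⟩ <;> simp [vplus, lev]; omega

lemma lev_vminus (b : BlockAddr) : lev (vminus b) = 2 * b.length + 2 := by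
  rcases b with _ | ⟨⟨c, r⟩, b⟩ <;> simp [vminus, lev]; omega

lemma lev_pole (b : BlockAddr) (p : Bool) :
    lev (if p then vplus b else vminus b) = 2 * b.length + 2 := by
  cases p <;> simp [lev_vplus, lev_vminus]

lemma lev_gvec (b : BlockAddr) (c : Clause3) (k : Fin 6) :
    lev (gvec b c k) = 2 * b.length + 3 := by
  fin_cases k <;> rfl

/-- All values of `lev`, as one set of rewrite rules. -/
lemma lev_table : lev RVert.vv = 0 ∧ lev RVert.pp = 1 ∧ lev RVert.pm = 1 ∧ lev RVert.qp = 2 ∧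
    lev RVert.qm = 2 ∧ (∀ b x, lev (RVert.var b x) = 2 * b.length + 3) ∧
    (∀ b c x, lev (RVert.varC b c x) = 2 * b.length + 3) ∧
    (∀ b c l, lev (RVert.q b c l) = 2 * b.length + 4) ∧
    (∀ b, lev (vplus b) = 2 * b.length + 2) ∧ (∀ b, lev (vminus b) = 2 * b.length + 2) ∧
    (∀ b (p : Bool), lev (if p = true then vplus b else vminus b) = 2 * b.length + 2) ∧
    (∀ b c k, lev (gvec b c k) = 2 * b.length + 3) :=
  ⟨rfl, rfl, rfl, rfl, rfl, fun _ _ => rfl, fun _ _ _ => rfl, fun _ _ _ => rfl, lev_vplus,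
    lev_vminus, lev_pole, lev_gvec⟩

lemma lev_of_baseAdj {u w : RVert} (hb : baseAdj u w) :
    lev u = lev w + 1 ∨ lev w = lev u + 1 := by
  rcases hb with ⟨rfl, rfl⟩ | ⟨rfl, rfl⟩ | ⟨rfl, rfl⟩ | ⟨rfl, rfl⟩ | ⟨b, x, rfl, rfl | rfl⟩ |
    ⟨b, c, k, l, -, rfl, rfl⟩ | ⟨b, c, ⟨rfl, rfl⟩ | ⟨rfl, rfl⟩ | ⟨rfl, rfl⟩⟩
  all_goals simp [lev_table]

/-- `w` is a neighbour of `u` (in the ambient graph) on a lower level. -/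
def IsLow (u w : RVert) : Prop := (baseAdj u w ∨ baseAdj w u) ∧ lev w < lev u

lemma isLow_pp {w : RVert} (hw : IsLow RVert.pp w) : w = RVert.vv := by
  obtain ⟨-, hl⟩ := hw
  cases w <;> simp [lev_table] at hl ⊢

lemma isLow_pm {w : RVert} (hw : IsLow RVert.pm w) : w = RVert.vv := by
  obtain ⟨-, hl⟩ := hw
  cases w <;> simp [lev_table] at hl ⊢

lemma isLow_qp {w : RVert} (hw : IsLow RVert.qp w) : w = RVert.pp := by
  obtain ⟨hb, hl⟩ := hw
  rcases w with _ | _ | _ | _ | _ | _ | _ | _ <;> simp [lev_table] at hl ⊢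
  all_goals
    simp [baseAdj] at hb

lemma isLow_qm {w : RVert} (hw : IsLow RVert.qm w) : w = RVert.pm := by
  obtain ⟨hb, hl⟩ := hw
  rcases w with _ | _ | _ | _ | _ | _ | _ | _ <;> simp [lev_table] at hl ⊢
  all_goals
    simp [baseAdj] at hb

lemma isLow_var {b : BlockAddr} {x : ℕ} {w : RVert} (hw : IsLow (RVert.var b x) w) :
    w = vplus b ∨ w = vminus b := by
  obtain ⟨hb | hb, hl⟩ := hw
  · rcases hb with ⟨h1, h2⟩ | ⟨h1, h2⟩ | ⟨h1, h2⟩ | ⟨h1, h2⟩ | ⟨b', x', h1, h2⟩ |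
      ⟨b', c, k, l, -, h1, h2⟩ | ⟨b', c, ⟨h1, h2⟩ | ⟨h1, h2⟩ | ⟨h1, h2⟩⟩ <;> try cases h1
    · exact h2
    · have h1 := congrArg lev h1
      subst h2
      simp only [lev_table] at h1 hl
      omega
  · rcases hb with ⟨h1, h2⟩ | ⟨h1, h2⟩ | ⟨h1, h2⟩ | ⟨h1, h2⟩ | ⟨b', x', h1, h2 | h2⟩ |
      ⟨b', c, k, l, -, h1, h2⟩ | ⟨b', c, ⟨h1, h2⟩ | ⟨h1, h2⟩ | ⟨h1, h2⟩⟩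
    all_goals
      have h2 := congrArg lev h2
      simp only [lev_table] at h2
      subst h1
      simp only [lev_table] at hl
      omega

lemma isLow_varC {b : BlockAddr} {c : Clause3} {x : ℕ} {w : RVert}
    (hw : IsLow (RVert.varC b c x) w) :
    (x = c.v1 ∧ w = if c.p1 then vplus b else vminus b) ∨
    (x = c.v2 ∧ w = if c.p2 then vplus b else vminus b) ∨
    (x = c.v3 ∧ w = if c.p3 then vplus b else vminus b) := by
  obtain ⟨hb | hb, hl⟩ := hw
  · rcases hb with ⟨h1, h2⟩ | ⟨h1, h2⟩ | ⟨h1, h2⟩ | ⟨h1, h2⟩ | ⟨b', x', h1, h2⟩ |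
      ⟨b', c, k, l, -, h1, h2⟩ | ⟨b', c, ⟨h1, h2⟩ | ⟨h1, h2⟩ | ⟨h1, h2⟩⟩ <;> try cases h1
    · have h1 := congrArg lev h1
      subst h2
      simp only [lev_table] at h1 hl
      omega
    · exact Or.inl ⟨rfl, h2⟩
    · exact Or.inr (Or.inl ⟨rfl, h2⟩)
    · exact Or.inr (Or.inr ⟨rfl, h2⟩)
  · rcases hb with ⟨h1, h2⟩ | ⟨h1, h2⟩ | ⟨h1, h2⟩ | ⟨h1, h2⟩ | ⟨b', x', h1, h2 | h2⟩ |
      ⟨b', c, k, l, -, h1, h2⟩ | ⟨b', c, ⟨h1, h2⟩ | ⟨h1, h2⟩ | ⟨h1, h2⟩⟩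
    all_goals
      have h2 := congrArg lev h2
      simp only [lev_table] at h2
      subst h1
      simp only [lev_table] at hl
      omega

lemma isLow_q {b : BlockAddr} {c : Clause3} {l : Fin 8} {w : RVert}
    (hw : IsLow (RVert.q b c l) w) : ∃ k, Mmat k l = true ∧ w = gvec b c k := by
  obtain ⟨hb | hb, hl⟩ := hw
  · rcases hb with ⟨h1, h2⟩ | ⟨h1, h2⟩ | ⟨h1, h2⟩ | ⟨h1, h2⟩ | ⟨b', x', h1, h2⟩ |
      ⟨b', c, k, l, -, h1, h2⟩ | ⟨b', c, ⟨h1, h2⟩ | ⟨h1, h2⟩ | ⟨h1, h2⟩⟩ <;> try cases h1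
    have h1 := congrArg lev h1
    simp only [lev_table] at h1
    omega
  · rcases hb with ⟨h1, h2⟩ | ⟨h1, h2⟩ | ⟨h1, h2⟩ | ⟨h1, h2⟩ | ⟨b', x', h1, h2 | h2⟩ |
      ⟨b', c, k, l, hM, h1, h2⟩ | ⟨b', c, ⟨h1, h2⟩ | ⟨h1, h2⟩ | ⟨h1, h2⟩⟩
    case inr.inr.inr.inr.inr.inr.inl =>
      cases h2
      exact ⟨k, hM, h1⟩
    all_goals
      have h2 := congrArg lev h2
      simp only [lev_table] at h2
      subst h1
      simp only [lev_table] at hl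
      omega

/-! ### The level is the distance from the centre -/

section Graph

variable {φ : SAT3} {h : ℕ}

lemma validBlock_nil (hh : 1 ≤ h) : validBlock φ h [] := ⟨by simpa using hh, by simp⟩

lemma validVert_poles {b : BlockAddr} (hb : validBlock φ h b) :
    validVert φ h (vplus b) ∧ validVert φ h (vminus b) := by
  rcases b with _ | ⟨⟨c, r⟩, b⟩
  · exact ⟨trivial, trivial⟩
  · obtain ⟨h1, h2⟩ := hb
    have hv : validBlock φ h b :=
      ⟨by simp at h1; omega, fun p hp => h2 p (List.mem_cons_of_mem _ hp)⟩
    have hc := h2 (c, r) List.mem_cons_self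
    exact ⟨⟨hv, hc⟩, ⟨hv, hc⟩⟩

lemma mem_vars {c : Clause3} (hc : c ∈ φ.clauses) {x : ℕ} (hx : c.hasVar x) : x ∈ φ.vars := by
  refine Finset.mem_biUnion.2 ⟨c, hc, ?_⟩
  simpa [Clause3.hasVar] using hx

lemma validVert_gvec {b : BlockAddr} {c : Clause3} (hb : validBlock φ h b)
    (hc : c ∈ φ.clauses) (k : Fin 6) : validVert φ h (gvec b c k) := by
  fin_cases k
  · exact ⟨hb, mem_vars hc (Or.inl rfl)⟩
  · exact ⟨hb, hc, Or.inl rfl⟩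
  · exact ⟨hb, mem_vars hc (Or.inr (Or.inl rfl))⟩
  · exact ⟨hb, hc, Or.inr (Or.inl rfl)⟩
  · exact ⟨hb, mem_vars hc (Or.inr (Or.inr rfl))⟩
  · exact ⟨hb, hc, Or.inr (Or.inr rfl)⟩

lemma redAdj_iff {u w : RedVert φ h} :
    (reductionGraph φ h).Adj u w ↔ baseAdj u.1 w.1 ∨ baseAdj w.1 u.1 := by
  simp only [reductionGraph, SimpleGraph.comap_adj, SimpleGraph.fromRel_adj]
  refine ⟨fun hx => hx.2, fun hx => ⟨fun he => ?_, hx⟩⟩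
  rw [he] at hx
  rcases hx with hx | hx <;> have := lev_of_baseAdj hx <;> omega

lemma lev_of_adj {u w : RedVert φ h} (ha : (reductionGraph φ h).Adj u w) :
    lev u.1 = lev w.1 + 1 ∨ lev w.1 = lev u.1 + 1 := by
  rcases redAdj_iff.1 ha with hx | hx <;> have := lev_of_baseAdj hx <;> omega

lemma lev_le_add_length {H : SimpleGraph (RedVert φ h)} (hH : H ≤ reductionGraph φ h)
    {u w : RedVert φ h} (p : H.Walk u w) : lev w.1 ≤ lev u.1 + p.length := by
  induction p with
  | nil => simp
  | cons ha p ih =>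
    have := lev_of_adj (hH ha)
    rw [SimpleGraph.Walk.length_cons]
    omega

lemma exists_low (u : RVert) (hu : validVert φ h u) (h0 : u ≠ RVert.vv) :
    ∃ w, validVert φ h w ∧ (baseAdj u w ∨ baseAdj w u) ∧ lev u = lev w + 1 := by
  rcases u with _ | _ | _ | _ | _ | ⟨b, x⟩ | ⟨b, c, x⟩ | ⟨b, c, l⟩
  · exact ⟨RVert.pp, trivial, by simp [baseAdj], rfl⟩
  · exact ⟨RVert.vv, trivial, by simp [baseAdj], rfl⟩
  · exact absurd rfl h0
  · exact ⟨RVert.vv, trivial, by simp [baseAdj], rfl⟩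
  · exact ⟨RVert.pm, trivial, by simp [baseAdj], rfl⟩
  · exact ⟨vplus b, (validVert_poles hu.1).1,
      Or.inl (Or.inr (Or.inr (Or.inr (Or.inr (Or.inl ⟨b, x, rfl, Or.inl rfl⟩))))),
      by rw [lev_vplus]; rfl⟩
  · have hv (p : Bool) : validVert φ h (if p then vplus b else vminus b) := by
      cases p
      · exact (validVert_poles hu.1).2
      · exact (validVert_poles hu.1).1
    rcases hu.2.2 with rfl | rfl | rfl
    · exact ⟨_, hv c.p1, Or.inl (Or.inr (Or.inr (Or.inr (Or.inr (Or.inr (Or.inr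
        ⟨b, c, Or.inl ⟨rfl, rfl⟩⟩)))))), by rw [lev_pole]; rfl⟩
    · exact ⟨_, hv c.p2, Or.inl (Or.inr (Or.inr (Or.inr (Or.inr (Or.inr (Or.inr
        ⟨b, c, Or.inr (Or.inl ⟨rfl, rfl⟩)⟩)))))), by rw [lev_pole]; rfl⟩
    · exact ⟨_, hv c.p3, Or.inl (Or.inr (Or.inr (Or.inr (Or.inr (Or.inr (Or.inr
        ⟨b, c, Or.inr (Or.inr ⟨rfl, rfl⟩)⟩)))))), by rw [lev_pole]; rfl⟩
  · have hk : ∀ l, ∃ k, Mmat k l = true := by decide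
    obtain ⟨k, hk⟩ := hk l
    exact ⟨gvec b c k, validVert_gvec hu.1 hu.2 k,
      Or.inr (Or.inr (Or.inr (Or.inr (Or.inr (Or.inr (Or.inl ⟨b, c, k, l, hk, rfl, rfl⟩)))))),
      by rw [lev_gvec]; rfl⟩

lemma dist_eq_lev (hG : (reductionGraph φ h).Connected) (u : RedVert φ h) :
    (reductionGraph φ h).dist (centralVert φ h) u = lev u.1 := by
  apply le_antisymm
  · generalize hn : lev u.1 = n
    induction n generalizing u with
    | zero =>
      have : u = centralVert φ h := by
        rcases u with ⟨u, hu⟩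
        apply Subtype.ext
        change u = RVert.vv
        cases u <;> simp [lev_table] at hn ⊢
      simp [this]
    | succ n ih =>
      obtain ⟨w, hw, hb, hl⟩ := exists_low u.1 u.2 (by intro he; rw [he] at hn; simp [lev_table] at hn)
      have h1 := ih ⟨w, hw⟩ (by change lev w = n; omega)
      have h2 : (reductionGraph φ h).Adj ⟨w, hw⟩ u := redAdj_iff.2 hb.symm
      have h3 := hG.dist_triangle (u := centralVert φ h) (v := ⟨w, hw⟩) (w := u)
      rw [SimpleGraph.dist_eq_one_iff_adj.2 h2] at h3
      omega
  · obtain ⟨p, hp⟩ := hG.exists_walk_length_eq_dist (centralVert φ h) u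
    have := lev_le_add_length le_rfl p
    rw [hp] at this
    simpa [centralVert, lev] using this

variable {T : SimpleGraph (RedVert φ h)}

/-- The ball of radius `lev u` around the centre is connected in `T`, so `u` has a `T`-neighbour in
it; edges join consecutive levels, so this neighbour is one level below `u`. -/
lemma exists_parent (hsub : T ≤ reductionGraph φ h) (htree : T.IsTree)
    (hconc : IsConcentrated (reductionGraph φ h) T (centralVert φ h))
    {u : RVert} (hu : validVert φ h u) (h0 : u ≠ RVert.vv) :
    ∃ w : RedVert φ h, T.Adj ⟨u, hu⟩ w ∧ IsLow u w.1 := by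
  have hd := dist_eq_lev (htree.connected.mono hsub)
  have hc := hconc (lev u)
  set S : Set (RedVert φ h) :=
    {x | (reductionGraph φ h).dist (centralVert φ h) x ≤ lev u} with hS
  have hmu : (⟨u, hu⟩ : RedVert φ h) ∈ S := (hd ⟨u, hu⟩).le
  have hmv : centralVert φ h ∈ S := by simp [hS]
  have hne : (⟨⟨u, hu⟩, hmu⟩ : S) ≠ ⟨centralVert φ h, hmv⟩ := by
    intro he
    exact h0 (congrArg (fun z : S => z.1.1) he)
  have : Nontrivial S := ⟨⟨_, _, hne⟩⟩
  obtain ⟨w, hw⟩ := hc.preconnected.exists_adj_of_nontrivial ⟨⟨u, hu⟩, hmu⟩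
  have ha : T.Adj ⟨u, hu⟩ w.1 := hw
  have hl : lev w.1.1 ≤ lev u := (hd w.1).symm.le.trans w.2
  refine ⟨w.1, ha, redAdj_iff.1 (hsub ha), ?_⟩
  have := lev_of_adj (hsub ha)
  simp only at this
  omega

/-! ### The two sides of the tree -/

/-- `u` is a vertex of the graph that lies on the side of `p_1` in `T` minus the centre. -/
def Plus (T : SimpleGraph (RedVert φ h)) (u : RVert) : Prop :=
  ∃ (hu : validVert φ h u) (p : T.Walk ⟨RVert.pp, trivial⟩ ⟨u, hu⟩),
    centralVert φ h ∉ p.support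

lemma Plus.trans {u w : RedVert φ h} (hp : Plus T u.1) (p : T.Walk u w)
    (h0 : centralVert φ h ∉ p.support) : Plus T w.1 := by
  obtain ⟨hu, q, hq⟩ := hp
  refine ⟨w.2, q.append p, ?_⟩
  rw [SimpleGraph.Walk.mem_support_append_iff]
  tauto

lemma plus_congr_walk {u w : RedVert φ h} (p : T.Walk u w)
    (h0 : centralVert φ h ∉ p.support) : Plus T u.1 ↔ Plus T w.1 :=
  ⟨fun hp => hp.trans p h0, fun hp => hp.trans p.reverse (by simpa using h0)⟩

lemma plus_congr {u w : RedVert φ h} (ha : T.Adj u w) (hu : u.1 ≠ RVert.vv)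
    (hw : w.1 ≠ RVert.vv) : Plus T u.1 ↔ Plus T w.1 := by
  refine plus_congr_walk ha.toWalk ?_
  simp only [SimpleGraph.Walk.support_cons, SimpleGraph.Walk.support_nil, List.mem_cons,
    List.not_mem_nil, or_false, not_or]
  exact ⟨fun he => hu (congrArg Subtype.val he).symm, fun he => hw (congrArg Subtype.val he).symm⟩

/-- A tree path between the two sides runs through the centre. -/
lemma lev_add_lev_le_dist (hsub : T ≤ reductionGraph φ h) (htree : T.IsTree)
    {u w : RedVert φ h} (hne : ¬ (Plus T u.1 ↔ Plus T w.1)) :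
    lev u.1 + lev w.1 ≤ T.dist u w := by
  classical
  obtain ⟨p, hp⟩ := htree.connected.exists_walk_length_eq_dist u w
  have hm : centralVert φ h ∈ p.support := by
    by_contra h0
    exact hne (plus_congr_walk p h0)
  have h1 := lev_le_add_length hsub (p.takeUntil _ hm).reverse
  have h2 := lev_le_add_length hsub (p.dropUntil _ hm)
  have h3 := congrArg SimpleGraph.Walk.length (p.take_spec hm)
  rw [SimpleGraph.Walk.length_append] at h3
  rw [SimpleGraph.Walk.length_reverse] at h1
  have h4 : lev (centralVert φ h).1 = 0 := rfl
  omega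

/-- The two neighbours of the centre lie on different sides, since their only tree path runs
through the centre. -/
lemma not_plus_pm (htree : T.IsTree)
    (h1 : T.Adj ⟨RVert.pp, trivial⟩ (centralVert φ h))
    (h2 : T.Adj (centralVert φ h) ⟨RVert.pm, trivial⟩) : ¬ Plus T RVert.pm := by
  classical
  rintro ⟨hu, p, hp⟩
  have hq : (SimpleGraph.Walk.cons h1 (SimpleGraph.Walk.cons h2 .nil)).IsPath := by
    rw [SimpleGraph.Walk.isPath_def]
    simp only [SimpleGraph.Walk.support_cons, SimpleGraph.Walk.support_nil]
    simp [centralVert, Subtype.ext_iff]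
  have he := (htree.isAcyclic.subsingleton_path _ _).elim ⟨_, hq⟩ p.toPath
  apply hp
  apply p.support_toPath_subset_support
  rw [← he]
  simp

/-! ### Splitting blocks -/

/-- If the two vertices of each pair `g_{2j}, g_{2j+1}` are on different sides and every `q_l`
is on the side of one of its `M`-neighbours, then two consecutive `q_l` are on different sides. -/
lemma exists_switch (P : Fin 6 → Prop) (Q : Fin 8 → Prop)
    (h1 : P 1 ↔ ¬ P 0) (h2 : P 3 ↔ ¬ P 2) (h3 : P 5 ↔ ¬ P 4)
    (hQ : ∀ l, ∃ k, Mmat k l = true ∧ (Q l ↔ P k)) :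
    ∃ r : Fin 7, ¬ (Q r.castSucc ↔ Q r.succ) := by
  by_contra! hc
  have hall : ∀ l : Fin 8, Q l ↔ Q 0 := by
    intro l
    induction l using Fin.induction with
    | zero => rfl
    | succ r ih => exact (hc r).symm.trans ih
  have hex : ∀ l, ∃ k, Mmat k l = true ∧ (Q 0 ↔ P k) := fun l => by
    obtain ⟨k, hk, hq⟩ := hQ l
    exact ⟨k, hk, (hall l).symm.trans hq⟩
  -- The column that picks from each pair the vertex on the side opposite to `Q 0` is contradictory.
  have e : ∀ l, (Mmat 0 l = true ∧ (Q 0 ↔ P 0)) ∨ (Mmat 1 l = true ∧ (Q 0 ↔ P 1)) ∨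
      (Mmat 2 l = true ∧ (Q 0 ↔ P 2)) ∨ (Mmat 3 l = true ∧ (Q 0 ↔ P 3)) ∨
      (Mmat 4 l = true ∧ (Q 0 ↔ P 4)) ∨ (Mmat 5 l = true ∧ (Q 0 ↔ P 5)) := by
    intro l
    obtain ⟨k, hk⟩ := hex l
    fin_cases k <;> simp_all
  have e0 := e 0
  have e1 := e 1
  have e2 := e 2
  have e3 := e 3
  have e4 := e 4
  have e5 := e 5
  have e6 := e 6
  have e7 := e 7
  simp [Mmat] at e0 e1 e2 e3 e4 e5 e6 e7
  by_cases q0 : Q 0 <;> by_cases p0 : P 0 <;> by_cases p2 : P 2 <;> by_cases p4 : P 4 <;> simp_all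

/-- The poles of the block `b` lie on different sides. -/
def IsSplit (T : SimpleGraph (RedVert φ h)) (b : BlockAddr) : Prop :=
  ¬ (Plus T (vplus b) ↔ Plus T (vminus b))

lemma vplus_ne (b : BlockAddr) : vplus b ≠ RVert.vv := fun he => by
  have := congrArg lev he
  simp [lev_table] at this

lemma vminus_ne (b : BlockAddr) : vminus b ≠ RVert.vv := fun he => by
  have := congrArg lev he
  simp [lev_table] at this

lemma isSplit_nil (hsub : T ≤ reductionGraph φ h) (htree : T.IsTree)
    (hconc : IsConcentrated (reductionGraph φ h) T (centralVert φ h)) :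
    IsSplit T ([] : BlockAddr) := by
  obtain ⟨⟨w1, _⟩, a1, l1⟩ := exists_parent hsub htree hconc (u := RVert.pp) trivial (by simp)
  obtain ⟨⟨w2, _⟩, a2, l2⟩ := exists_parent hsub htree hconc (u := RVert.pm) trivial (by simp)
  obtain ⟨⟨w3, _⟩, a3, l3⟩ := exists_parent hsub htree hconc (u := RVert.qp) trivial (by simp)
  obtain ⟨⟨w4, _⟩, a4, l4⟩ := exists_parent hsub htree hconc (u := RVert.qm) trivial (by simp)
  obtain rfl := isLow_pp l1
  obtain rfl := isLow_pm l2
  obtain rfl := isLow_qp l3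
  obtain rfl := isLow_qm l4
  have hp : Plus T RVert.pp := ⟨trivial, .nil, by
    rw [SimpleGraph.Walk.support_nil]
    simp [centralVert, Subtype.ext_iff]⟩
  have hm : ¬ Plus T RVert.pm := not_plus_pm htree a1 a2.symm
  have e1 : Plus T RVert.qp ↔ Plus T RVert.pp := plus_congr a3 (by simp) (by simp)
  have e2 : Plus T RVert.qm ↔ Plus T RVert.pm := plus_congr a4 (by simp) (by simp)
  simp only [IsSplit, vplus, vminus]
  tauto

/-- A variable vertex is on the side of the pole chosen by the block assignment. -/
lemma plus_var (hsub : T ≤ reductionGraph φ h) (htree : T.IsTree)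
    (hconc : IsConcentrated (reductionGraph φ h) T (centralVert φ h))
    {b : BlockAddr} (hb : validBlock φ h b) {x : ℕ} (hx : x ∈ φ.vars) :
    Plus T (RVert.var b x) ↔
      Plus T (if blockAssign φ h T b x then vplus b else vminus b) := by
  have hv : validVert φ h (RVert.var b x) := ⟨hb, hx⟩
  by_cases ha : blockAssign φ h T b x = true
  · rw [if_pos ha]
    obtain ⟨hu, hw, hadj⟩ := (@decide_eq_true_iff _ (Classical.dec _)).1 ha
    exact plus_congr hadj (by simp) (vplus_ne b)
  · rw [if_neg ha]
    obtain ⟨⟨w, hw⟩, hadj, hl⟩ := exists_parent hsub htree hconc hv (by simp)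
    rcases isLow_var hl with rfl | rfl
    · exact absurd ((@decide_eq_true_iff _ (Classical.dec _)).2 ⟨hv, hw, hadj⟩) ha
    · exact plus_congr hadj (by simp) (vminus_ne b)

/-- An occurrence vertex `x_c^b` is on the side of the only pole to which it is joined. -/
lemma plus_varC (hsub : T ≤ reductionGraph φ h) (htree : T.IsTree)
    (hconc : IsConcentrated (reductionGraph φ h) T (centralVert φ h))
    {b : BlockAddr} (hb : validBlock φ h b) {c : Clause3} (hc : c ∈ φ.clauses) {x : ℕ} {p : Bool}
    (hx : x = c.v1 ∧ p = c.p1 ∨ x = c.v2 ∧ p = c.p2 ∨ x = c.v3 ∧ p = c.p3) :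
    Plus T (RVert.varC b c x) ↔ Plus T (if p then vplus b else vminus b) := by
  have hv : validVert φ h (RVert.varC b c x) := ⟨hb, hc, by unfold Clause3.hasVar; tauto⟩
  obtain ⟨⟨w, hw⟩, hadj, hl⟩ := exists_parent hsub htree hconc hv (by simp)
  obtain ⟨d1, d2, d3⟩ := φ.distinct c hc
  have hwe : w = if p then vplus b else vminus b := by
    rcases isLow_varC hl with ⟨e, hw⟩ | ⟨e, hw⟩ | ⟨e, hw⟩ <;>
      rcases hx with ⟨e', rfl⟩ | ⟨e', rfl⟩ | ⟨e', rfl⟩ <;> first | exact hw | omega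
  subst hwe
  refine plus_congr hadj (by simp) ?_
  cases p
  · exact vminus_ne b
  · exact vplus_ne b

/-- If the assignment of a split block falsifies the clause `c`, then one of the seven
pairs of consecutive vertices `q_{r,c}, q_{r+1,c}` of the block is separated. -/
lemma exists_isSplit_cons (hsub : T ≤ reductionGraph φ h) (htree : T.IsTree)
    (hconc : IsConcentrated (reductionGraph φ h) T (centralVert φ h))
    {b : BlockAddr} (hb : validBlock φ h b) (hs : IsSplit T b) {c : Clause3}
    (hc : c ∈ φ.clauses) (hn : ¬ c.satisfiedBy (blockAssign φ h T b)) :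
    ∃ r : Fin 7, IsSplit T ((c, r) :: b) := by
  simp only [Clause3.satisfiedBy, not_or] at hn
  obtain ⟨n1, n2, n3⟩ := hn
  -- As `c` is falsified, `x^b` hangs at the pole to which `x_c^b` is not joined.
  have key : ∀ {x : ℕ} {p : Bool}, blockAssign φ h T b x ≠ p →
      (x = c.v1 ∧ p = c.p1 ∨ x = c.v2 ∧ p = c.p2 ∨ x = c.v3 ∧ p = c.p3) →
      (Plus T (RVert.varC b c x) ↔ ¬ Plus T (RVert.var b x)) := by
    intro x p hne hx
    rw [plus_var hsub htree hconc hb (mem_vars hc (by unfold Clause3.hasVar; tauto)),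
      plus_varC hsub htree hconc hb hc hx]
    unfold IsSplit at hs
    generalize blockAssign φ h T b x = a at hne ⊢
    cases a <;> cases p <;> simp at hne ⊢ <;> tauto
  refine exists_switch (fun k => Plus T (gvec b c k)) (fun l => Plus T (RVert.q b c l))
    (key n1 (Or.inl ⟨rfl, rfl⟩)) (key n2 (Or.inr (Or.inl ⟨rfl, rfl⟩)))
    (key n3 (Or.inr (Or.inr ⟨rfl, rfl⟩))) fun l => ?_
  have hv : validVert φ h (RVert.q b c l) := ⟨hb, hc⟩
  obtain ⟨⟨w, hw⟩, hadj, hl⟩ := exists_parent hsub htree hconc hv (by simp)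
  obtain ⟨k, hk, rfl⟩ := isLow_q hl
  refine ⟨k, hk, plus_congr hadj (by simp) fun he => ?_⟩
  have := congrArg lev he
  simp [lev_table] at this

/-- In layer `h`, a variable vertex of a split block is too far in `T` from one of the poles. -/
lemma not_isSplit_last (hsub : T ≤ reductionGraph φ h) (htree : T.IsTree)
    (hstretch : ∀ u w : RedVert φ h, (reductionGraph φ h).Adj u w → T.dist u w ≤ 4 * h)
    {b : BlockAddr} (hb : validBlock φ h b) (hl : b.length + 1 = h) : ¬ IsSplit T b := by
  intro hs
  obtain ⟨c, hc⟩ := φ.nonempty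
  have hv : validVert φ h (RVert.var b c.v1) := ⟨hb, mem_vars hc (Or.inl rfl)⟩
  have hfar : ∀ {w : RVert}, (w = vplus b ∨ w = vminus b) →
      (Plus T (RVert.var b c.v1) ↔ Plus T w) := by
    intro w hw
    have hwv : validVert φ h w := by
      rcases hw with rfl | rfl
      exacts [(validVert_poles hb).1, (validVert_poles hb).2]
    have hlw : lev w = 2 * b.length + 2 := by
      rcases hw with rfl | rfl
      exacts [lev_vplus b, lev_vminus b]
    by_contra hne
    have h1 := lev_add_lev_le_dist hsub htree (u := ⟨_, hv⟩) (w := ⟨w, hwv⟩) hne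
    have h2 := hstretch ⟨_, hv⟩ ⟨w, hwv⟩ (redAdj_iff.2
      (Or.inl (Or.inr (Or.inr (Or.inr (Or.inr (Or.inl ⟨b, c.v1, rfl, hw⟩)))))))
    simp only [lev_table] at h1
    omega
  exact hs ((hfar (Or.inl rfl)).symm.trans (hfar (Or.inr rfl)))

end Graph

/-- Let `φ` be a 3-SAT instance, `h > 1`, `G = reduction(φ, h)` and `v` the
central vertex of the initial path.  If `T` is a `v`-concentrated spanning tree of `G` such
that `d_T(u, w) ≤ 4h` for every edge `uw` of `G`, then there is a building block `G^{i,j}`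
of `G` such that the truth assignment `a` defined by `a(x) = true` iff `x^{i,j}` is adjacent
to `v_⊕^{i,j}` in `T` satisfies `φ`. -/
theorem exists_block_with_satisfying_assignment
    (φ : SAT3) (h : ℕ) (hh : 1 < h) (T : SimpleGraph (RedVert φ h))
    (hsub : T ≤ reductionGraph φ h) (htree : T.IsTree)
    (hconc : IsConcentrated (reductionGraph φ h) T (centralVert φ h))
    (hstretch : ∀ u w : RedVert φ h, (reductionGraph φ h).Adj u w → T.dist u w ≤ 4 * h) :
    ∃ b : BlockAddr, validBlock φ h b ∧ φ.satisfiedBy (blockAssign φ h T b) := by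
  by_contra! hno
  have key : ∀ n, n + 1 ≤ h → ∃ b : BlockAddr, b.length = n ∧ validBlock φ h b ∧ IsSplit T b := by
    intro n
    induction n with
    | zero => exact fun _ => ⟨[], rfl, validBlock_nil hh.le, isSplit_nil hsub htree hconc⟩
    | succ n ih =>
      intro hn
      obtain ⟨b, hbl, hb, hs⟩ := ih (by omega)
      have hns := hno b hb
      simp only [SAT3.satisfiedBy, not_forall] at hns
      obtain ⟨c, hc, hcn⟩ := hns
      obtain ⟨r, hr⟩ := exists_isSplit_cons hsub htree hconc hb hs hc hcn
      refine ⟨(c, r) :: b, by simp [hbl], ⟨by simp [hbl]; omega, ?_⟩, hr⟩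
      intro p hp
      rcases List.mem_cons.1 hp with rfl | hp
      exacts [hc, hb.2 p hp]
  obtain ⟨b, hbl, hb, hs⟩ := key (h - 1) (by omega)
  exact not_isSplit_last hsub htree hstretch hb (by omega) hs
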